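/- In ℝ⁵ with the standard Euclidean inner product, let S be the set of six vectors (-2/3,4/3,-2/3,1/2,-1/2), (-2/3,1/3,1/3,1/2,-1/2), (-2/3,-2/3,4/3,1/2,-1/2), (-2/3,4/3,-2/3,-1/2,1/2), (-2/3,1/3,1/3,-1/2,1/2), (-2/3,-2/3,4/3,-1/2,1/2). Then the minimum of ‖x‖² over x in the convex hull of S equals 2/3, and it is attained at the point β₁₀ = (-2/3,1/3,1/3,0,0). -/

import Mathlib

/-- A vector in `ℝ⁵` with the standard Euclidean inner product. -/
noncomputable def vec5 (a b c d e : ℝ) : EuclideanSpace ℝ (Fin 5) :=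
  (WithLp.equiv 2 (Fin 5 → ℝ)).symm ![a, b, c, d, e]

/-! Every weight `w` satisfies `⟪β₁₀, w⟫ = ‖β₁₀‖²`, so the six weights lie in the affine hyperplane
through `β₁₀` orthogonal to it, whose closest point to the origin is `β₁₀`. It lies in the hull as
the midpoint of the two weights of the coordinates with `j₁ = 2`, `j₂ = 3`. -/

open scoped RealInnerProductSpace

section SupportingHyperplane

variable {E : Type*} [SeminormedAddCommGroup E] [InnerProductSpace ℝ E] {s : Set E} {v x : E}

theorem le_inner_of_mem_convexHull {r : ℝ} (hs : ∀ y ∈ s, r ≤ ⟪v, y⟫) (hx : x ∈ convexHull ℝ s) :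
    r ≤ ⟪v, x⟫ :=
  convexHull_min hs (convex_halfSpace_ge (innerₗ E v).isLinear r) hx

theorem norm_le_norm_of_norm_sq_le_inner (h : ‖v‖ ^ 2 ≤ ⟪v, x⟫) : ‖v‖ ≤ ‖x‖ := by
  have hvx : ‖v‖ * ‖v‖ ≤ ‖v‖ * ‖x‖ :=
    calc ‖v‖ * ‖v‖ = ‖v‖ ^ 2 := (sq _).symm
      _ ≤ ⟪v, x⟫ := h
      _ ≤ ‖v‖ * ‖x‖ := real_inner_le_norm v x
  obtain hv | hv := (norm_nonneg v).eq_or_lt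
  · exact hv ▸ norm_nonneg x
  · exact le_of_mul_le_mul_left hvx hv

theorem norm_le_norm_of_mem_convexHull (hs : ∀ y ∈ s, ‖v‖ ^ 2 ≤ ⟪v, y⟫)
    (hx : x ∈ convexHull ℝ s) : ‖v‖ ≤ ‖x‖ :=
  norm_le_norm_of_norm_sq_le_inner (le_inner_of_mem_convexHull hs hx)

end SupportingHyperplane

section Coordinates

variable (a b c d e a' b' c' d' e' : ℝ)

theorem inner_vec5 :
    ⟪vec5 a b c d e, vec5 a' b' c' d' e'⟫ = a * a' + b * b' + c * c' + d * d' + e * e' := by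
  simp [vec5, PiLp.inner_apply, Fin.sum_univ_five, mul_comm]

theorem norm_vec5_sq : ‖vec5 a b c d e‖ ^ 2 = a ^ 2 + b ^ 2 + c ^ 2 + d ^ 2 + e ^ 2 := by
  rw [← real_inner_self_eq_norm_sq, inner_vec5]
  ring

theorem midpoint_vec5 :
    midpoint ℝ (vec5 a b c d e) (vec5 a' b' c' d' e') =
      vec5 ((a + a') / 2) ((b + b') / 2) ((c + c') / 2) ((d + d') / 2) ((e + e') / 2) := by
  ext i
  fin_cases i <;> simp [vec5, midpoint_eq_smul_add] <;> ring

end Coordinates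

/-- Table (2.3) for `(GL(3)×GL(2), Sym²k³⊗k²)`: the minimum of `‖x‖²` over the
convex hull of the listed weight vectors equals `2/3`, attained at
`β₁₀ = ((-2/3) (1/3) (1/3) 0 0)`. -/
theorem minsq_of_convexHull_weights :
    let S : Set (EuclideanSpace ℝ (Fin 5)) :=
      {vec5 (-2/3) (4/3) (-2/3) (1/2) (-1/2),
       vec5 (-2/3) (1/3) (1/3) (1/2) (-1/2),
       vec5 (-2/3) (-2/3) (4/3) (1/2) (-1/2),
       vec5 (-2/3) (4/3) (-2/3) (-1/2) (1/2),
       vec5 (-2/3) (1/3) (1/3) (-1/2) (1/2),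
       vec5 (-2/3) (-2/3) (4/3) (-1/2) (1/2)}
    let β : EuclideanSpace ℝ (Fin 5) := vec5 (-2/3) (1/3) (1/3) 0 0
    β ∈ convexHull ℝ S ∧ ‖β‖ ^ 2 = 2/3 ∧
      ∀ x ∈ convexHull ℝ S, (2/3 : ℝ) ≤ ‖x‖ ^ 2 := by
  intro S β
  have hβ_norm : ‖β‖ ^ 2 = 2 / 3 := by
    norm_num [β, norm_vec5_sq]
  have hβ_midpoint : midpoint ℝ (vec5 (-2/3) (1/3) (1/3) (1/2) (-1/2))
      (vec5 (-2/3) (1/3) (1/3) (-1/2) (1/2)) = β := by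
    norm_num [β, midpoint_vec5]
  have hS_inner : ∀ w ∈ S, ⟪β, w⟫ = ‖β‖ ^ 2 := by
    rw [hβ_norm]
    rintro w (rfl | rfl | rfl | rfl | rfl | rfl) <;> norm_num [β, inner_vec5]
  refine ⟨?_, hβ_norm, fun x hx ↦ ?_⟩
  · rw [← hβ_midpoint]
    exact (convex_convexHull ℝ S).midpoint_mem
      (subset_convexHull ℝ S (by simp [S])) (subset_convexHull ℝ S (by simp [S]))
  · have hβ_le : ‖β‖ ≤ ‖x‖ := norm_le_norm_of_mem_convexHull (fun w hw ↦ (hS_inner w hw).ge) hx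
    rw [← hβ_norm]
    gcongr
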